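/- arXiv:2404.18164 — 4 statements merged into one kernel-verified Lean document; each statement's English description precedes it below -/
import Mathlib

section
/- The value of f' at zero is given explicitly by f'(0) = exp(L·R₁²/4)·κ^{-1} + (exp(L·R₁²/4) − 1)·L^{-1}, where f'(r) := (1/2)∫_r^∞ s·exp(−(1/2)∫_r^s x·θ(x) dx) ds. -/
/-- The piecewise function `θ(x) = -L` for `x < R₁` and `θ(x) = κ` for `x ≥ R₁`. -/
noncomputable def theta (κ L R₁ : ℝ) : ℝ → ℝ := fun x => if x < R₁ then -L else κ

/-- `f'(r) = (1/2)∫_r^∞ s · exp(-(1/2)∫_r^s x·θ(x) dx) ds`. -/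
noncomputable def fPrime (κ L R₁ : ℝ) (r : ℝ) : ℝ :=
  (1 / 2) * ∫ s in Set.Ioi r, s * Real.exp (-(1 / 2) * ∫ x in r..s, x * theta κ L R₁ x)

open MeasureTheory Set Filter Topology

lemma aux_low (κ L R s : ℝ) (h0 : 0 ≤ s) (hs : s ≤ R) :
    IntervalIntegrable (fun x => x * theta κ L R x) volume 0 s ∧
    ∫ x in (0:ℝ)..s, x * theta κ L R x = -L * s ^ 2 / 2 := by
  have hae : ∀ᵐ x ∂(volume : Measure ℝ), x ∈ uIoc 0 s → x * theta κ L R x = x * (-L) := by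
    have : ∀ᵐ x ∂(volume : Measure ℝ), x ≠ R := by
      simp [ae_iff, measure_singleton]
    filter_upwards [this] with x hx hm
    rw [uIoc_of_le h0] at hm
    have : x < R := lt_of_le_of_ne (hm.2.trans hs) hx
    simp [theta, this]
  constructor
  · have hi : IntervalIntegrable (fun x : ℝ => x * (-L)) volume 0 s :=
      (by fun_prop : Continuous (fun x : ℝ => x * (-L))).intervalIntegrable _ _
    refine hi.congr_ae ?_
    rw [EventuallyEq, ae_restrict_iff' measurableSet_uIoc]
    filter_upwards [hae] with x hx hm
    exact (hx hm).symm
  · rw [intervalIntegral.integral_congr_ae hae, intervalIntegral.integral_mul_const, integral_id]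
    ring

lemma aux_high (κ L R s : ℝ) (h0 : 0 ≤ R) (hs : R ≤ s) :
    ∫ x in (0:ℝ)..s, x * theta κ L R x = -L * R ^ 2 / 2 + κ * (s ^ 2 - R ^ 2) / 2 := by
  have heq : EqOn (fun x => x * theta κ L R x) (fun x => x * κ) (uIcc R s) := by
    intro x hx
    rw [uIcc_of_le hs] at hx
    simp [theta, not_lt.mpr hx.1]
  have hi : IntervalIntegrable (fun x : ℝ => x * κ) volume R s :=
    (by fun_prop : Continuous (fun x : ℝ => x * κ)).intervalIntegrable _ _
  have hi' : IntervalIntegrable (fun x => x * theta κ L R x) volume R s :=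
    hi.congr (fun x hx => (heq (uIoc_subset_uIcc hx)).symm)
  obtain ⟨h1, h2⟩ := aux_low κ L R R h0 le_rfl
  rw [← intervalIntegral.integral_add_adjacent_intervals h1 hi', h2,
    intervalIntegral.integral_congr heq, intervalIntegral.integral_mul_const, integral_id]
  ring

theorem fPrime_zero_eq (κ L R₁ : ℝ) (hκ : 0 < κ) (hL : 0 < L) (hR₁ : 0 ≤ R₁) :
    fPrime κ L R₁ 0 =
      Real.exp (L * R₁ ^ 2 / 4) * κ⁻¹ + (Real.exp (L * R₁ ^ 2 / 4) - 1) * L⁻¹ := by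
  unfold fPrime
  set F : ℝ → ℝ := fun s => s * Real.exp (-(1 / 2) * ∫ x in (0:ℝ)..s, x * theta κ L R₁ x) with hF
  have hlow : EqOn F (fun s => s * Real.exp (L * s ^ 2 / 4)) (Ioc 0 R₁) := by
    intro s hs
    simp only [hF]
    rw [(aux_low κ L R₁ s hs.1.le hs.2).2]
    ring_nf
  have hhigh : EqOn F (fun s => s * Real.exp (L * R₁ ^ 2 / 4 - κ * (s ^ 2 - R₁ ^ 2) / 4))
      (Ioi R₁) := by
    intro s hs
    simp only [hF]
    rw [aux_high κ L R₁ s hR₁ (le_of_lt hs)]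
    ring_nf
  -- lower part
  have hlowc : Continuous (fun s : ℝ => s * Real.exp (L * s ^ 2 / 4)) := by fun_prop
  have hlowi : IntegrableOn F (Ioc 0 R₁) :=
    (integrableOn_congr_fun hlow measurableSet_Ioc).mpr
      ((hlowc.intervalIntegrable 0 R₁).1)
  have hlowv : ∫ s in Ioc 0 R₁, F s = 2 * L⁻¹ * (Real.exp (L * R₁ ^ 2 / 4) - 1) := by
    rw [setIntegral_congr_fun measurableSet_Ioc hlow, ← intervalIntegral.integral_of_le hR₁,
      intervalIntegral.integral_eq_sub_of_hasDerivAt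
        (f := fun s => 2 * L⁻¹ * Real.exp (L * s ^ 2 / 4)) _ (hlowc.intervalIntegrable 0 R₁)]
    · simp
      ring
    · intro x _
      have h := ((((hasDerivAt_pow 2 x).const_mul L).div_const 4).exp).const_mul (2 * L⁻¹)
      refine h.congr_deriv ?_
      field_simp
      norm_num
      try ring
  -- upper part
  have hder : ∀ x ∈ Ici R₁, HasDerivAt
      (fun s => -(2 * κ⁻¹) * Real.exp (L * R₁ ^ 2 / 4 - κ * (s ^ 2 - R₁ ^ 2) / 4))
      (x * Real.exp (L * R₁ ^ 2 / 4 - κ * (x ^ 2 - R₁ ^ 2) / 4)) x := by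
    intro x _
    have h := (((((((hasDerivAt_pow 2 x).sub_const (R₁ ^ 2)).const_mul κ).div_const 4).const_sub
      (L * R₁ ^ 2 / 4))).exp).const_mul (-(2 * κ⁻¹))
    refine h.congr_deriv ?_
    field_simp
    norm_num
    try ring
  have hpos : ∀ x ∈ Ioi R₁, 0 ≤ x * Real.exp (L * R₁ ^ 2 / 4 - κ * (x ^ 2 - R₁ ^ 2) / 4) :=
    fun x hx => mul_nonneg (hR₁.trans (le_of_lt hx)) (Real.exp_pos _).le
  have htend : Tendsto
      (fun s => -(2 * κ⁻¹) * Real.exp (L * R₁ ^ 2 / 4 - κ * (s ^ 2 - R₁ ^ 2) / 4)) atTop (𝓝 0) := by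
    rw [← mul_zero (-(2 * κ⁻¹))]
    refine Tendsto.const_mul _ (Real.tendsto_exp_atBot.comp ?_)
    have h2 : Tendsto (fun s : ℝ => (κ / 4) * s ^ 2) atTop atTop :=
      (tendsto_pow_atTop two_ne_zero).const_mul_atTop (by positivity)
    have h3 := tendsto_atBot_add_const_left atTop (L * R₁ ^ 2 / 4 + κ * R₁ ^ 2 / 4)
      (tendsto_neg_atTop_atBot.comp h2)
    refine h3.congr (fun s => ?_)
    simp only [Function.comp]
    ring
  have hhighi : IntegrableOn F (Ioi R₁) :=
    (integrableOn_congr_fun hhigh measurableSet_Ioi).mpr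
      (integrableOn_Ioi_deriv_of_nonneg' hder hpos htend)
  have hhighv : ∫ s in Ioi R₁, F s = 2 * κ⁻¹ * Real.exp (L * R₁ ^ 2 / 4) := by
    rw [setIntegral_congr_fun measurableSet_Ioi hhigh,
      integral_Ioi_of_hasDerivAt_of_nonneg' hder hpos htend]
    simp
  rw [← Ioc_union_Ioi_eq_Ioi hR₁, setIntegral_union (Ioc_disjoint_Ioi le_rfl) measurableSet_Ioi
    hlowi hhighi, hlowv, hhighv]
  ring
end

section
/- The function f'(r) := (1/2)∫_r^∞ s·exp(−(1/2)∫_r^s x·θ(x) dx) ds is nonincreasing on [0, ∞); consequently, for every r ≥ 0 one has 1/κ ≤ f'(r) ≤ f'(0), where f'(0) = exp(L·R₁²/4)·κ^{-1} + (exp(L·R₁²/4) − 1)·L^{-1}. -/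
open MeasureTheory Set Filter Topology

lemma inner_lo (κ L R r s : ℝ) (hrs : r ≤ s) (hs : s ≤ R) :
    ∫ x in r..s, x * theta κ L R x = -L * (s ^ 2 - r ^ 2) / 2 := by
  have h : ∫ x in r..s, x * theta κ L R x = ∫ x in r..s, x * (-L) := by
    apply intervalIntegral.integral_congr_ae
    have : ∀ᵐ x : ℝ, x ≠ R := by simp [ae_iff]
    filter_upwards [this] with x hx hm
    rw [uIoc_of_le hrs] at hm
    have : x < R := lt_of_le_of_ne (hm.2.trans hs) hx
    simp [theta, this]
  rw [h, intervalIntegral.integral_mul_const, integral_id]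
  ring

lemma inner_hi (κ L R r s : ℝ) (hrs : r ≤ s) (hr : R ≤ r) :
    ∫ x in r..s, x * theta κ L R x = κ * (s ^ 2 - r ^ 2) / 2 := by
  have h : ∫ x in r..s, x * theta κ L R x = ∫ x in r..s, x * κ := by
    apply intervalIntegral.integral_congr
    intro x hm
    rw [uIcc_of_le hrs] at hm
    have : ¬ x < R := not_lt.2 (hr.trans hm.1)
    simp [theta, this]
  rw [h, intervalIntegral.integral_mul_const, integral_id]
  ring

lemma theta_int (κ L R a b : ℝ) :
    IntervalIntegrable (fun x => x * theta κ L R x) volume a b := by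
  have h : IntervalIntegrable (theta κ L R) volume a b := by
    have hm : Measurable (theta κ L R) :=
      Measurable.ite measurableSet_Iio measurable_const measurable_const
    refine (intervalIntegrable_const (c := max |L| |κ|)).mono_fun hm.aestronglyMeasurable ?_
    filter_upwards with x
    simp only [theta, Real.norm_eq_abs]
    rw [abs_of_nonneg (a := max |L| |κ|) (by positivity)]
    split_ifs <;> simp
  exact h.continuousOn_mul continuousOn_id

lemma tail (κ a : ℝ) (hκ : 0 < κ) (ha : 0 ≤ a) :
    IntegrableOn (fun s => s * Real.exp (-(κ / 4) * (s ^ 2 - a ^ 2))) (Ioi a) ∧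
    ∫ s in Ioi a, s * Real.exp (-(κ / 4) * (s ^ 2 - a ^ 2)) = 2 / κ := by
  have hd : ∀ x ∈ Ici a, HasDerivAt (fun s => -(2 / κ) * Real.exp (-(κ / 4) * (s ^ 2 - a ^ 2)))
      (x * Real.exp (-(κ / 4) * (x ^ 2 - a ^ 2))) x := by
    intro x _
    have h := ((((hasDerivAt_pow 2 x).sub_const (a ^ 2)).const_mul (-(κ / 4))).exp).const_mul
      (-(2 / κ))
    refine HasDerivAt.congr_deriv (f := _) h ?_
    simp
    field_simp
    ring
  have hp : ∀ x ∈ Ioi a, 0 ≤ x * Real.exp (-(κ / 4) * (x ^ 2 - a ^ 2)) := fun x hx =>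
    mul_nonneg (ha.trans (le_of_lt hx)) (Real.exp_pos _).le
  have ht : Tendsto (fun s : ℝ => -(2 / κ) * Real.exp (-(κ / 4) * (s ^ 2 - a ^ 2))) atTop (𝓝 0) := by
    rw [← mul_zero (-(2 / κ))]
    apply Tendsto.const_mul
    apply Real.tendsto_exp_atBot.comp
    apply Tendsto.const_mul_atTop_of_neg (by linarith)
    exact tendsto_atTop_add_const_right _ _ (tendsto_pow_atTop two_ne_zero)
  refine ⟨integrableOn_Ioi_deriv_of_nonneg' hd hp ht, ?_⟩
  rw [integral_Ioi_of_hasDerivAt_of_nonneg' hd hp ht]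
  simp

lemma fPrime_hi (κ L R r : ℝ) (hκ : 0 < κ) (hR : 0 ≤ R) (hr : R ≤ r) :
    fPrime κ L R r = κ⁻¹ := by
  have h : ∫ s in Ioi r, s * Real.exp (-(1 / 2) * ∫ x in r..s, x * theta κ L R x) =
      ∫ s in Ioi r, s * Real.exp (-(κ / 4) * (s ^ 2 - r ^ 2)) := by
    apply setIntegral_congr_fun measurableSet_Ioi
    intro s hs
    simp only
    rw [inner_hi κ L R r s (le_of_lt hs) hr]
    congr 2; ring
  rw [fPrime, h, (tail κ r hκ (hR.trans hr)).2]
  field_simp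

lemma fPrime_lo (κ L R r : ℝ) (hκ : 0 < κ) (hL : 0 < L) (hr0 : 0 ≤ r) (hr : r ≤ R) :
    fPrime κ L R r = Real.exp (L * (R ^ 2 - r ^ 2) / 4) * κ⁻¹ +
      (Real.exp (L * (R ^ 2 - r ^ 2) / 4) - 1) * L⁻¹ := by
  set F : ℝ → ℝ := fun s => s * Real.exp (-(1 / 2) * ∫ x in r..s, x * theta κ L R x) with hF
  have e1 : EqOn F (fun s => s * Real.exp (L / 4 * (s ^ 2 - r ^ 2))) (Ioc r R) := by
    intro s hs
    simp only [hF]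
    rw [inner_lo κ L R r s hs.1.le hs.2]
    congr 2; ring
  have e2 : EqOn F (fun s => Real.exp (L * (R ^ 2 - r ^ 2) / 4) *
      (s * Real.exp (-(κ / 4) * (s ^ 2 - R ^ 2)))) (Ioi R) := by
    intro s hs
    simp only [hF]
    rw [← intervalIntegral.integral_add_adjacent_intervals (theta_int κ L R r R)
      (theta_int κ L R R s), inner_lo κ L R r R hr le_rfl, inner_hi κ L R R s (le_of_lt hs) le_rfl,
      mul_left_comm, ← Real.exp_add]
    congr 2; ring
  have hc : Continuous (fun s : ℝ => s * Real.exp (L / 4 * (s ^ 2 - r ^ 2))) := by fun_prop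
  obtain ⟨t1, t2⟩ := tail κ R hκ (hr0.trans hr)
  have i1 : IntegrableOn F (Ioc r R) :=
    (hc.integrableOn_Ioc).congr_fun e1.symm measurableSet_Ioc
  have i2 : IntegrableOn F (Ioi R) :=
    IntegrableOn.congr_fun (Integrable.const_mul t1 _) e2.symm measurableSet_Ioi
  have v1 : ∫ s in Ioc r R, F s = 2 / L * (Real.exp (L * (R ^ 2 - r ^ 2) / 4) - 1) := by
    rw [setIntegral_congr_fun measurableSet_Ioc e1, ← intervalIntegral.integral_of_le hr]
    rw [intervalIntegral.integral_eq_sub_of_hasDerivAt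
      (f := fun s => (2 / L) * Real.exp (L / 4 * (s ^ 2 - r ^ 2))) _ (hc.intervalIntegrable _ _)]
    · simp
      ring_nf
    · intro x _
      have h := ((((hasDerivAt_pow 2 x).sub_const (r ^ 2)).const_mul (L / 4)).exp).const_mul
        (2 / L)
      refine HasDerivAt.congr_deriv (f := _) h ?_
      simp
      field_simp
      ring
  have v2 : ∫ s in Ioi R, F s = Real.exp (L * (R ^ 2 - r ^ 2) / 4) * (2 / κ) := by
    rw [setIntegral_congr_fun measurableSet_Ioi e2, integral_const_mul, t2]
  have : fPrime κ L R r = 1 / 2 * ∫ s in Ioi r, F s := rfl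
  rw [this, ← Ioc_union_Ioi_eq_Ioi hr, setIntegral_union (Ioc_disjoint_Ioi le_rfl)
    measurableSet_Ioi i1 i2, v1, v2]
  field_simp
  ring

/-- `f'` is nonincreasing on `[0, ∞)`; consequently for every `r ≥ 0`,
`1/κ ≤ f'(r) ≤ f'(0)`, where `f'(0) = exp(L·R₁²/4)·κ⁻¹ + (exp(L·R₁²/4) − 1)·L⁻¹`. -/
theorem fPrime_antitone_and_bounds (κ L R₁ : ℝ) (hκ : 0 < κ) (hL : 0 < L) (hR₁ : 0 ≤ R₁) :
    AntitoneOn (fPrime κ L R₁) (Set.Ici 0) ∧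
    (∀ r, 0 ≤ r → 1 / κ ≤ fPrime κ L R₁ r ∧ fPrime κ L R₁ r ≤ fPrime κ L R₁ 0) ∧
    fPrime κ L R₁ 0 =
      Real.exp (L * R₁ ^ 2 / 4) * κ⁻¹ + (Real.exp (L * R₁ ^ 2 / 4) - 1) * L⁻¹ := by
  have h0 : fPrime κ L R₁ 0 =
      Real.exp (L * R₁ ^ 2 / 4) * κ⁻¹ + (Real.exp (L * R₁ ^ 2 / 4) - 1) * L⁻¹ := by
    rw [fPrime_lo κ L R₁ 0 hκ hL le_rfl hR₁]; simp
  have hlow : ∀ r, 0 ≤ r → 1 / κ ≤ fPrime κ L R₁ r := by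
    intro r hr
    rw [one_div]
    rcases le_total r R₁ with h | h
    · rw [fPrime_lo κ L R₁ r hκ hL hr h]
      have hE : 1 ≤ Real.exp (L * (R₁ ^ 2 - r ^ 2) / 4) := by
        apply Real.one_le_exp
        have : r ^ 2 ≤ R₁ ^ 2 := by gcongr
        have := mul_nonneg hL.le (sub_nonneg.2 this)
        linarith
      have a := mul_le_mul_of_nonneg_right hE (inv_pos.2 hκ).le
      have b := mul_nonneg (sub_nonneg.2 hE) (inv_pos.2 hL).le
      linarith
    · rw [fPrime_hi κ L R₁ r hκ hR₁ h]
  have hanti : AntitoneOn (fPrime κ L R₁) (Set.Ici 0) := by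
    intro a ha b hb hab
    have ha' : 0 ≤ a := ha
    rcases le_total b R₁ with h | h
    · rw [fPrime_lo κ L R₁ b hκ hL hb h, fPrime_lo κ L R₁ a hκ hL ha (hab.trans h)]
      gcongr
    · rw [fPrime_hi κ L R₁ b hκ hR₁ h, ← one_div]
      exact hlow a ha
  exact ⟨hanti, fun r hr => ⟨hlow r hr, hanti (Set.mem_Ici.2 le_rfl) hr hr⟩, h0⟩
end

section
/- At every point r > 0 with r ≠ R₁, the function f'(r) := (1/2)∫_r^∞ s·exp(−(1/2)∫_r^s x·θ(x) dx) ds is differentiable, and its derivative satisfies the ordinary differential equation 2·(f')'(r) − r·θ(r)·f'(r) = −r. -/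
open MeasureTheory Set Filter Topology

lemma aux_ii (κ L R₁ a b : ℝ) :
    IntervalIntegrable (fun x => x * theta κ L R₁ x) volume a b := by
  have hm : Measurable (theta κ L R₁) := by
    unfold theta
    exact Measurable.ite measurableSet_Iio measurable_const measurable_const
  have h1 : IntervalIntegrable (theta κ L R₁) volume a b := by
    refine IntervalIntegrable.mono_fun (g := theta κ L R₁)
      (f := fun _ => |L| + |κ|) (intervalIntegrable_const) hm.aestronglyMeasurable ?_
    refine Eventually.of_forall fun x => ?_
    have := abs_nonneg L
    have := abs_nonneg κ
    simp only [theta, Real.norm_eq_abs]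
    rw [abs_of_nonneg (a := |L| + |κ|) (by positivity)]
    split_ifs
    · rw [abs_neg]; linarith
    · linarith
  exact h1.continuousOn_mul continuousOn_id

lemma aux_theta_cont (κ L R₁ r : ℝ) (hrR : r ≠ R₁) : ContinuousAt (theta κ L R₁) r := by
  rcases lt_or_gt_of_ne hrR with h | h
  · refine (continuousAt_const (y := -L)).congr ?_
    filter_upwards [Iio_mem_nhds h] with x hx
    simp only [theta, if_pos (show x < R₁ from hx)]
  · refine (continuousAt_const (y := κ)).congr ?_
    filter_upwards [Ioi_mem_nhds h] with x hx
    simp only [theta, if_neg (not_lt.2 (le_of_lt (show R₁ < x from hx)))]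

noncomputable def auxG (κ L R₁ s : ℝ) : ℝ := ∫ x in (0:ℝ)..s, x * theta κ L R₁ x

lemma auxG_cont (κ L R₁ : ℝ) : Continuous (auxG κ L R₁) :=
  intervalIntegral.continuous_primitive (fun a b => aux_ii κ L R₁ a b) 0

lemma auxG_deriv (κ L R₁ r : ℝ) (hrR : r ≠ R₁) :
    HasDerivAt (auxG κ L R₁) (r * theta κ L R₁ r) r := by
  have hm : Measurable (theta κ L R₁) := by
    unfold theta
    exact Measurable.ite measurableSet_Iio measurable_const measurable_const
  refine intervalIntegral.integral_hasDerivAt_right (aux_ii κ L R₁ 0 r) ?_ ?_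
  · exact (measurable_id.mul hm).stronglyMeasurable.stronglyMeasurableAtFilter
  · exact continuousAt_id.mul (aux_theta_cont κ L R₁ r hrR)

noncomputable def auxH (κ L R₁ s : ℝ) : ℝ := s * Real.exp (-(1/2) * auxG κ L R₁ s)

lemma auxH_cont (κ L R₁ : ℝ) : Continuous (auxH κ L R₁) := by
  have := auxG_cont κ L R₁
  unfold auxH
  fun_prop

lemma auxH_int (κ L R₁ : ℝ) (hκ : 0 < κ) (hR₁ : 0 ≤ R₁) :
    IntegrableOn (auxH κ L R₁) (Ioi 0) := by
  rw [← Ioc_union_Ioi_eq_Ioi hR₁]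
  refine IntegrableOn.union ?_ ?_
  · exact ((auxH_cont κ L R₁).integrableOn_Icc).mono_set Ioc_subset_Icc_self
  · have h0 := ((integrable_mul_exp_neg_mul_sq (b := κ/4) (by positivity)).const_mul
      (Real.exp (-(1/2) * (auxG κ L R₁ R₁ - κ * R₁^2/2)))).integrableOn (s := Ioi R₁)
    refine h0.congr_fun (fun s hs => ?_) measurableSet_Ioi
    have hs' : R₁ < s := hs
    have hG : auxG κ L R₁ s = auxG κ L R₁ R₁ + κ * (s^2 - R₁^2)/2 := by
      unfold auxG
      rw [← intervalIntegral.integral_add_adjacent_intervals (aux_ii κ L R₁ 0 R₁)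
        (aux_ii κ L R₁ R₁ s)]
      congr 1
      have : ∫ x in R₁..s, x * theta κ L R₁ x = ∫ x in R₁..s, x * κ := by
        refine intervalIntegral.integral_congr fun x hx => ?_
        rw [uIcc_of_le hs'.le] at hx
        simp only [theta, if_neg (not_lt.2 hx.1)]
      rw [this, intervalIntegral.integral_mul_const, integral_id]
      ring
    simp only [auxH, hG]
    rw [mul_left_comm, ← Real.exp_add]
    congr 2
    ring

lemma aux_fPrime (κ L R₁ t : ℝ) (hκ : 0 < κ) (hR₁ : 0 ≤ R₁) (ht : 0 < t) :
    fPrime κ L R₁ t = (1/2) * (Real.exp ((1/2) * auxG κ L R₁ t) *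
      ((∫ s in Ioi 0, auxH κ L R₁ s) - ∫ s in (0:ℝ)..t, auxH κ L R₁ s)) := by
  have hi := auxH_int κ L R₁ hκ hR₁
  have e : (∫ s in Ioi 0, auxH κ L R₁ s) - ∫ s in (0:ℝ)..t, auxH κ L R₁ s
      = ∫ s in Ioi t, auxH κ L R₁ s := by
    rw [← intervalIntegral.integral_Ioi_sub_Ioi hi ht.le]
    ring
  rw [e, ← integral_const_mul, fPrime]
  congr 2
  ext s
  have : ∫ x in t..s, x * theta κ L R₁ x = auxG κ L R₁ s - auxG κ L R₁ t := by
    unfold auxG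
    rw [intervalIntegral.integral_interval_sub_left (aux_ii _ _ _ _ _) (aux_ii _ _ _ _ _)]
  rw [this, auxH, mul_left_comm, ← Real.exp_add]
  congr 2
  ring

/-- at every `r > 0` with `r ≠ R₁`, the function `f'` is differentiable,
and its derivative satisfies `2·(f')'(r) − r·θ(r)·f'(r) = −r`. -/
theorem fPrime_hasDerivAt_ODE (κ L R₁ : ℝ) (hκ : 0 < κ) (hL : 0 < L) (hR₁ : 0 ≤ R₁)
    (r : ℝ) (hr : 0 < r) (hrR : r ≠ R₁) :
    ∃ y : ℝ, HasDerivAt (fPrime κ L R₁) y r ∧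
      2 * y - r * theta κ L R₁ r * fPrime κ L R₁ r = -r := by
  have hH : HasDerivAt (fun t => ∫ s in (0:ℝ)..t, auxH κ L R₁ s) (auxH κ L R₁ r) r :=
    (auxH_cont κ L R₁).integral_hasStrictDerivAt 0 r |>.hasDerivAt
  have hG := ((auxG_deriv κ L R₁ r hrR).const_mul (1/2)).exp
  have hd := (hG.mul (hH.const_sub (∫ s in Ioi 0, auxH κ L R₁ s))).const_mul (1/2)
  refine ⟨_, hd.congr_of_eventuallyEq ?_, ?_⟩
  · filter_upwards [Ioi_mem_nhds hr] with t ht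
    exact aux_fPrime κ L R₁ t hκ hR₁ ht
  · rw [aux_fPrime κ L R₁ r hκ hR₁ hr]
    have : Real.exp ((1/2) * auxG κ L R₁ r) * auxH κ L R₁ r = r := by
      rw [auxH, mul_left_comm, ← Real.exp_add]
      ring_nf
      simp
    linear_combination -this
end

section
/- Let ε ∈ (0, 1), C₃ > 0, L ≥ 0 and M > 0 be constants with (L/2)·ε/(1 − ε) < C₃. Let g : [0, ∞) → [0, ∞) be a continuous function such that for all t ≥ 0: (C₃ + L/2)·t^ε·∫_0^1 g(ts) ds ≤ (L/2)·t^ε·∫_0^1∫_0^1 g(t·s₁·s₂) ds₂ ds₁ + M. Then sup over t ≥ 0 of t^ε·∫_0^1 g(ts) ds is at most 2M/( C₃ − (L/2)·ε/(1 − ε) ). -/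
/-- deterministic bootstrap (continuity) argument. If a continuous
nonnegative `g : [0,∞) → [0,∞)` satisfies, for all `t ≥ 0`,
`(C₃ + L/2)·t^ε·∫₀¹ g(ts) ds ≤ (L/2)·t^ε·∫₀¹∫₀¹ g(ts₁s₂) ds₂ ds₁ + M`,
and `(L/2)·ε/(1−ε) < C₃`, then `t^ε·∫₀¹ g(ts) ds ≤ 2M/(C₃ − (L/2)·ε/(1−ε))`
for all `t ≥ 0`. -/
theorem bootstrap_time_average_bound
    (ε C₃ L M : ℝ) (hε0 : 0 < ε) (hε1 : ε < 1) (hC₃ : 0 < C₃) (hL : 0 ≤ L)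
    (hM : 0 < M) (hsmall : L / 2 * (ε / (1 - ε)) < C₃)
    (g : ℝ → ℝ) (hg_cont : ContinuousOn g (Set.Ici 0))
    (hg_nonneg : ∀ t, 0 ≤ t → 0 ≤ g t)
    (hineq : ∀ t, 0 ≤ t →
      (C₃ + L / 2) * t ^ ε * ∫ s in (0 : ℝ)..1, g (t * s) ≤
        L / 2 * t ^ ε * (∫ s₁ in (0 : ℝ)..1, ∫ s₂ in (0 : ℝ)..1, g (t * s₁ * s₂))
          + M) :
    ∀ t, 0 ≤ t →
      t ^ ε * ∫ s in (0 : ℝ)..1, g (t * s) ≤ 2 * M / (C₃ - L / 2 * (ε / (1 - ε))) := by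
  -- reduce to a globally continuous function
  obtain ⟨G, hG, hGg⟩ : ∃ G : ℝ → ℝ, Continuous G ∧ ∀ x, 0 ≤ x → G x = g x := by
    refine ⟨fun x => g (max x 0), ?_, ?_⟩
    · exact hg_cont.comp_continuous (by fun_prop) (fun x => le_max_right x 0)
    · intro x hx
      simp [max_eq_left hx]
  set A : ℝ → ℝ := fun t => ∫ s in (0 : ℝ)..1, G (t * s) with hA
  have hAcont : Continuous A := by
    apply intervalIntegral.continuous_parametric_intervalIntegral_of_continuous'
    simp only [Function.uncurry_def]
    fun_prop
  have hAg : ∀ t, 0 ≤ t → ∫ s in (0 : ℝ)..1, g (t * s) = A t := by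
    intro t ht
    apply intervalIntegral.integral_congr
    intro s hs
    rw [Set.uIcc_of_le zero_le_one] at hs
    exact (hGg _ (mul_nonneg ht hs.1)).symm
  have hineq' : ∀ t, 0 ≤ t → (C₃ + L / 2) * (t ^ ε * A t) ≤
      L / 2 * (∫ s in (0 : ℝ)..1, t ^ ε * A (t * s)) + M := by
    intro t ht
    have h := hineq t ht
    rw [hAg t ht] at h
    have h2 : (∫ s₁ in (0 : ℝ)..1, ∫ s₂ in (0 : ℝ)..1, g (t * s₁ * s₂))
        = ∫ s in (0 : ℝ)..1, A (t * s) := by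
      apply intervalIntegral.integral_congr
      intro s hs
      rw [Set.uIcc_of_le zero_le_one] at hs
      exact hAg _ (mul_nonneg ht hs.1)
    rw [h2] at h
    rw [intervalIntegral.integral_const_mul]
    linarith
  intro T hT
  rw [hAg T hT]
  have hIcont : Continuous (fun t : ℝ => t ^ ε * A t) :=
    (Real.continuous_rpow_const hε0.le).mul hAcont
  obtain ⟨u, hu, hmax⟩ := (isCompact_Icc (a := (0 : ℝ)) (b := T)).exists_isMaxOn
    ⟨0, le_refl _, hT⟩ hIcont.continuousOn
  have hmax' : ∀ x, 0 ≤ x → x ≤ T → x ^ ε * A x ≤ u ^ ε * A u :=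
    fun x h0 h1 => hmax ⟨h0, h1⟩
  have hint : ∫ s in (0 : ℝ)..1, u ^ ε * A (u * s) ≤ (u ^ ε * A u) * (1 / (1 - ε)) := by
    have h1 : ∫ s in (0 : ℝ)..1, s ^ (-ε) = 1 / (1 - ε) := by
      rw [integral_rpow (Or.inl (by linarith)), Real.one_rpow,
        Real.zero_rpow (by linarith), sub_zero, neg_add_eq_sub]
    rw [← h1, ← intervalIntegral.integral_const_mul]
    apply intervalIntegral.integral_mono_on_of_le_Ioo zero_le_one
    · exact Continuous.intervalIntegrable (by fun_prop) _ _
    · exact (intervalIntegral.intervalIntegrable_rpow' (by linarith)).const_mul _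
    · intro s hs
      have hs0 : 0 < s := hs.1
      have h := hmax' (u * s) (mul_nonneg hu.1 hs0.le)
        ((mul_le_of_le_one_right hu.1 hs.2.le).trans hu.2)
      rw [Real.mul_rpow hu.1 hs0.le] at h
      have hp : 0 < s ^ ε := Real.rpow_pos_of_pos hs0 _
      rw [Real.rpow_neg hs0.le, ← div_eq_mul_inv, le_div_iff₀ hp]
      linarith
  have h := hineq' u hu.1
  have hT' := hmax' T hT le_rfl
  have h1ε : 0 < 1 - ε := by linarith
  have hd : 0 < C₃ - L / 2 * (ε / (1 - ε)) := by linarith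
  have hk : 1 / (1 - ε) = 1 + ε / (1 - ε) := by field_simp; ring
  rw [hk] at hint
  have h3 := mul_le_mul_of_nonneg_left hint (by linarith : 0 ≤ L / 2)
  have h4 : (u ^ ε * A u) * (C₃ - L / 2 * (ε / (1 - ε))) ≤ M := by linarith
  have h5 := mul_le_mul_of_nonneg_right hT' hd.le
  rw [le_div_iff₀ hd]
  linarith
end
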